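/- Let n ≥ 1 be an integer. Suppose w̃ : {x ∈ ℝ^{n+4} : x_{n+4} ≥ 0} → ℝ is continuous, twice continuously differentiable on the open half-space ℝ^{n+4}₊, satisfies −Δw̃(x) = (x_{n+4}²/(1 + x_{n+4}))·|x + e_{n+4}|^{−n−4} for all x ∈ ℝ^{n+4}₊, w̃(x) = 0 whenever x_{n+4} = 0, and w̃(x) → 0 as |x| → ∞. Then w̃(x) ≥ (1/(2(n+2))) · [ 1 + x_{n+4} − 2·log(1 + x_{n+4}) − 1/(1 + x_{n+4}) ] · |x + e_{n+4}|^{−n−2} ≥ 0 for every x with x_{n+4} ≥ 0. -/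

import Mathlib

/-!
The asserted lower bound is a barrier. Write `t` for the last coordinate of `x`, `ρ = |x + e|²` and
`g(t) = 1 + t - 2 log (1 + t) - 1 / (1 + t)`, in dimension `m = n + 4`. Since `ρ ^ ((2 - m) / 2)` is
harmonic, with `g'(t) = t² / (1 + t)²` and `g''(t) = 2t / (1 + t)³` the barrier
`v = (2 (m - 2))⁻¹ g(t) ρ ^ ((2 - m) / 2)` satisfies
`Δv = -t² / (1 + t) ρ ^ (-m / 2) + (2 (m - 2))⁻¹ g''(t) ρ ^ ((2 - m) / 2)` (`laplacian_barrier`).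
The last term is strictly positive for `t > 0`, so `Δ(v - w) > 0` on the open half-space. A positive
value of `v - w` would produce a positive interior maximum, because `v - w` vanishes on the boundary
and at infinity; but the Laplacian is nonpositive at a local maximum (`laplacian_nonpos`). The
strictness of the inequality makes the usual perturbation in the weak maximum principle unnecessary.
-/

open Set

/-- The Euclidean Laplacian `Δf = Σᵢ ∂²f/∂xᵢ²`. -/
noncomputable def laplacian {m : ℕ} (f : EuclideanSpace ℝ (Fin m) → ℝ)
    (x : EuclideanSpace ℝ (Fin m)) : ℝ :=
  ∑ i : Fin m, fderiv ℝ (fun y => fderiv ℝ f y (EuclideanSpace.single i 1)) x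
    (EuclideanSpace.single i 1)

open Filter Topology

/-! ### Second derivatives along lines and the maximum principle -/

/-- Second partial derivatives in the nested-`fderiv` form can be computed along a line. -/
lemma fderiv_fderiv_eq_of_line {E : Type*} [NormedAddCommGroup E] [NormedSpace ℝ E]
    {f : E → ℝ} {x e : E} (hf : ContDiffAt ℝ 2 f x) {φ' : ℝ → ℝ} {c : ℝ}
    (h1 : ∀ᶠ s in 𝓝 (0 : ℝ), HasDerivAt (fun s : ℝ => f (x + s • e)) (φ' s) s)
    (h2 : HasDerivAt φ' c 0) :
    fderiv ℝ (fun y => fderiv ℝ f y e) x e = c := by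
  have hd : DifferentiableAt ℝ (fun y => fderiv ℝ f y e) x := by
    have h : ContDiffAt ℝ 1 (fderiv ℝ f) x := hf.fderiv_right (by norm_num)
    exact (h.differentiableAt (by norm_num)).clm_apply (differentiableAt_const e)
  have hl : ∀ s : ℝ, HasDerivAt (fun s : ℝ => x + s • e) e s := fun s => by
    simpa using ((hasDerivAt_id s).smul_const e).const_add x
  have hline : Tendsto (fun s : ℝ => x + s • e) (𝓝 0) (𝓝 x) := by
    simpa using (hl 0).continuousAt.tendsto
  have hev : ∀ᶠ y in 𝓝 x, DifferentiableAt ℝ f y :=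
    (hf.eventually (by simp)).mono fun y hy => hy.differentiableAt (by norm_num)
  have heq : (fun s : ℝ => fderiv ℝ f (x + s • e) e) =ᶠ[𝓝 0] φ' := by
    filter_upwards [h1, hline.eventually hev] with s hs hs'
    exact (hs'.hasFDerivAt.comp_hasDerivAt s (hl s)).unique hs
  have hA : HasDerivAt (fun s : ℝ => fderiv ℝ f (x + s • e) e)
      (fderiv ℝ (fun y => fderiv ℝ f y e) x e) 0 := by
    have hx : HasFDerivAt (fun y => fderiv ℝ f y e) (fderiv ℝ (fun y => fderiv ℝ f y e) x)
        (x + (0 : ℝ) • e) := by simpa using hd.hasFDerivAt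
    exact hx.comp_hasDerivAt (0 : ℝ) (hl 0)
  exact hA.unique (h2.congr_of_eventuallyEq heq)

lemma fderiv_fderiv_nonpos {E : Type*} [NormedAddCommGroup E] [NormedSpace ℝ E]
    {f : E → ℝ} {x : E} (e : E) (hf : ContDiffAt ℝ 2 f x) (hmax : IsLocalMax f x) :
    fderiv ℝ (fun y => fderiv ℝ f y e) x e ≤ 0 := by
  by_contra! hpos
  have hl : ContDiff ℝ 2 (fun s : ℝ => x + s • e) := by fun_prop
  have hφ : ContDiffAt ℝ 2 (fun s : ℝ => f (x + s • e)) 0 := by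
    have : ContDiffAt ℝ 2 f (x + (0 : ℝ) • e) := by simpa using hf
    exact this.comp (0 : ℝ) hl.contDiffAt
  set φ : ℝ → ℝ := fun s => f (x + s • e) with hφdef
  have hline : Tendsto (fun s : ℝ => x + s • e) (𝓝 0) (𝓝 x) := by
    simpa using hl.continuous.tendsto 0
  have hφmax : IsLocalMax φ 0 := by
    have := hline.eventually hmax
    simpa [IsLocalMax, IsMaxFilter, hφdef] using this
  have hd1 : ∀ᶠ s in 𝓝 (0 : ℝ), HasDerivAt φ (deriv φ s) s :=
    (hφ.eventually (by simp)).mono fun s hs => (hs.differentiableAt (by norm_num)).hasDerivAt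
  have hd2 : DifferentiableAt ℝ (deriv φ) 0 := by
    have h : ContDiffAt ℝ 1 (fderiv ℝ φ) 0 := hφ.fderiv_right (by norm_num)
    exact (h.differentiableAt (by norm_num)).clm_apply (differentiableAt_const (1 : ℝ))
  have key := fderiv_fderiv_eq_of_line hf hd1 hd2.hasDerivAt
  rw [key] at hpos
  -- A positive second derivative would make `0` a local minimum too, hence `φ` locally constant.
  have hmin : IsLocalMin φ 0 :=
    isLocalMin_of_deriv_deriv_pos hpos hφmax.deriv_eq_zero hφ.continuousAt
  have hconst : φ =ᶠ[𝓝 0] fun _ => φ 0 := by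
    filter_upwards [hφmax, hmin] with s h h' using le_antisymm h h'
  have h0 : deriv (deriv φ) 0 = 0 := by
    rw [hconst.deriv.deriv_eq]
    simp
  exact hpos.ne' h0

lemma laplacian_nonpos {m : ℕ} {f : EuclideanSpace ℝ (Fin m) → ℝ}
    {x : EuclideanSpace ℝ (Fin m)} (hf : ContDiffAt ℝ 2 f x) (hmax : IsLocalMax f x) :
    laplacian f x ≤ 0 :=
  Finset.sum_nonpos fun _ _ => fderiv_fderiv_nonpos _ hf hmax

lemma laplacian_const_mul_sub {m : ℕ} {f g : EuclideanSpace ℝ (Fin m) → ℝ}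
    {x : EuclideanSpace ℝ (Fin m)} (hf : ContDiffAt ℝ 2 f x) (hg : ContDiffAt ℝ 2 g x) (c : ℝ) :
    laplacian (fun y => c * f y - g y) x = c * laplacian f x - laplacian g x := by
  have hd : ∀ {h : EuclideanSpace ℝ (Fin m) → ℝ}, ContDiffAt ℝ 2 h x → ∀ e,
      DifferentiableAt ℝ (fun y => fderiv ℝ h y e) x := fun {h} hh e => by
    have h' : ContDiffAt ℝ 1 (fderiv ℝ h) x := hh.fderiv_right (by norm_num)
    exact (h'.differentiableAt (by norm_num)).clm_apply (differentiableAt_const e)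
  have hev : ∀ {h : EuclideanSpace ℝ (Fin m) → ℝ}, ContDiffAt ℝ 2 h x →
      ∀ᶠ y in 𝓝 x, DifferentiableAt ℝ h y := fun hh =>
    (hh.eventually (by simp)).mono fun y hy => hy.differentiableAt (by norm_num)
  unfold laplacian
  rw [Finset.mul_sum, ← Finset.sum_sub_distrib]
  refine Finset.sum_congr rfl fun i _ => ?_
  have heq : (fun y => fderiv ℝ (fun y => c * f y - g y) y (EuclideanSpace.single i 1)) =ᶠ[𝓝 x]
      fun y => c * fderiv ℝ f y (EuclideanSpace.single i 1)
        - fderiv ℝ g y (EuclideanSpace.single i 1) := by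
    filter_upwards [hev hf, hev hg] with y h1 h2
    rw [fderiv_fun_sub (h1.const_mul c) h2, fderiv_const_mul h1]
    rfl
  rw [heq.fderiv_eq, fderiv_fun_sub ((hd hf _).const_mul c) (hd hg _),
    fderiv_const_mul (hd hf _)]
  rfl

/-! ### The one-variable profile -/

/-- The factor of the barrier depending only on the last coordinate. -/
noncomputable def profile (t : ℝ) : ℝ := 1 + t - 2 * Real.log (1 + t) - 1 / (1 + t)

lemma hasDerivAt_profile {t : ℝ} (ht : 0 < 1 + t) :
    HasDerivAt profile (t ^ 2 / (1 + t) ^ 2) t := by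
  have h0 : HasDerivAt (fun t : ℝ => 1 + t) 1 t := (hasDerivAt_id t).const_add 1
  have h := (h0.sub ((h0.log ht.ne').const_mul 2)).sub ((hasDerivAt_const t (1 : ℝ)).div h0 ht.ne')
  refine h.congr_deriv ?_
  field_simp
  ring

lemma hasDerivAt_profile' {t : ℝ} (ht : 0 < 1 + t) :
    HasDerivAt (fun t : ℝ => t ^ 2 / (1 + t) ^ 2) (2 * t / (1 + t) ^ 3) t := by
  have h0 : HasDerivAt (fun t : ℝ => 1 + t) 1 t := (hasDerivAt_id t).const_add 1
  have h := ((hasDerivAt_id t).pow 2).div (h0.pow 2) (pow_ne_zero 2 ht.ne')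
  refine h.congr_deriv ?_
  simp only [id, Pi.pow_apply]
  field_simp
  ring

lemma profile_zero : profile 0 = 0 := by simp [profile]

lemma profile_nonneg {t : ℝ} (ht : 0 ≤ t) : 0 ≤ profile t := by
  have hmono : MonotoneOn profile (Ici 0) := by
    refine monotoneOn_of_deriv_nonneg (convex_Ici 0) ?_ ?_ ?_
    · exact fun s hs =>
        (hasDerivAt_profile (by simp at hs; linarith)).continuousAt.continuousWithinAt
    · rw [interior_Ici]
      exact fun s hs =>
        (hasDerivAt_profile (by simp at hs; linarith)).differentiableAt.differentiableWithinAt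
    · rw [interior_Ici]
      intro s hs
      rw [(hasDerivAt_profile (by simp at hs; linarith)).deriv]
      positivity
  simpa [profile_zero] using hmono (mem_Ici.2 le_rfl) (mem_Ici.2 ht) ht

lemma profile_le {t : ℝ} (ht : 0 ≤ t) : profile t ≤ 1 + t := by
  have h1 : 0 ≤ Real.log (1 + t) := Real.log_nonneg (by linarith)
  have h2 : 0 ≤ 1 / (1 + t) := by positivity
  unfold profile
  linarith

/-! ### The barrier and its Laplacian -/

/-- The unnormalised barrier. The power of the distance to `-e_k` is written as a power of the
squared distance, which is smooth and quadratic along lines. -/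
noncomputable def barrier {m : ℕ} (k : Fin m) (p : ℝ) (x : EuclideanSpace ℝ (Fin m)) : ℝ :=
  profile (x k) * (‖x + EuclideanSpace.single k (1 : ℝ)‖ ^ 2) ^ p

lemma one_add_le_norm {m : ℕ} (k : Fin m) (x : EuclideanSpace ℝ (Fin m)) :
    1 + x k ≤ ‖x + EuclideanSpace.single k (1 : ℝ)‖ := by
  have h := PiLp.norm_apply_le (x + EuclideanSpace.single k (1 : ℝ)) k
  have h2 := le_abs_self ((x + EuclideanSpace.single k (1 : ℝ)) k)
  rw [Real.norm_eq_abs] at h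
  simp at h h2
  linarith

lemma contDiffAt_barrier {m : ℕ} (k : Fin m) (p : ℝ) {x : EuclideanSpace ℝ (Fin m)}
    (hx : 0 ≤ x k) : ContDiffAt ℝ 2 (barrier k p) x := by
  have hn := one_add_le_norm k x
  have h1 : ContDiffAt ℝ 2 (fun y : EuclideanSpace ℝ (Fin m) => 1 + y k) x :=
    contDiffAt_const.add (EuclideanSpace.proj (𝕜 := ℝ) k).contDiff.contDiffAt
  have h0 : 1 + x k ≠ 0 := by linarith
  have h2 : ContDiffAt ℝ 2
      (fun y : EuclideanSpace ℝ (Fin m) => ‖y + EuclideanSpace.single k (1 : ℝ)‖ ^ 2) x :=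
    (contDiffAt_id.add contDiffAt_const).norm_sq ℝ
  have h3 : ‖x + EuclideanSpace.single k (1 : ℝ)‖ ^ 2 ≠ 0 := by
    have : 0 < ‖x + EuclideanSpace.single k (1 : ℝ)‖ := by linarith
    positivity
  unfold barrier profile
  exact ((h1.sub (contDiffAt_const.mul (h1.log h0))).sub (contDiffAt_const.div h1 h0)).mul
    (h2.rpow_const_of_ne h3)

/-- The quadratic `|z + s e_i|²` in `s`. -/
lemma norm_sq_line {m : ℕ} (z : EuclideanSpace ℝ (Fin m)) (i : Fin m) (s : ℝ) :
    ‖z + s • EuclideanSpace.single i (1 : ℝ)‖ ^ 2 = ‖z‖ ^ 2 + 2 * s * z i + s ^ 2 := by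
  rw [norm_add_sq_real, inner_smul_right, EuclideanSpace.inner_single_right, norm_smul]
  simp
  ring

/-- Pure second partial derivatives of the barrier, with `z = x + e_k` and `d = δ_{ik}`: the product
rule for `profile (x k + s d) * q(s) ^ p`, where `q(s) = |z + s e_i|²`. -/
lemma fderiv_fderiv_barrier {m : ℕ} (k i : Fin m) (p : ℝ) {x : EuclideanSpace ℝ (Fin m)}
    (hx : 0 < x k) {z : EuclideanSpace ℝ (Fin m)} (hz : z = x + EuclideanSpace.single k (1 : ℝ))
    {d : ℝ} (hd : d = (EuclideanSpace.single i (1 : ℝ) : EuclideanSpace ℝ (Fin m)) k) :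
    fderiv ℝ (fun y => fderiv ℝ (barrier k p) y (EuclideanSpace.single i 1)) x
        (EuclideanSpace.single i 1)
      = 2 * x k / (1 + x k) ^ 3 * d ^ 2 * (‖z‖ ^ 2) ^ p
        + 4 * p * (x k ^ 2 / (1 + x k) ^ 2) * (‖z‖ ^ 2) ^ (p - 1) * (d * z i)
        + profile (x k) * (4 * p * (p - 1) * (‖z‖ ^ 2) ^ (p - 2) * z i ^ 2
          + 2 * p * (‖z‖ ^ 2) ^ (p - 1)) := by
  have hzpos : 0 < ‖z‖ := by
    have := one_add_le_norm k x
    rw [hz]; linarith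
  set q : ℝ → ℝ := fun s => ‖z‖ ^ 2 + 2 * s * z i + s ^ 2 with hq
  have hqd : ∀ s, HasDerivAt q (2 * z i + 2 * s) s := fun s => by
    have h := ((((hasDerivAt_id s).const_mul 2).mul_const (z i)).const_add (‖z‖ ^ 2)).add
      ((hasDerivAt_id s).pow 2)
    refine h.congr_deriv ?_
    simp
  have hqpos : ∀ᶠ s in 𝓝 (0 : ℝ), 0 < q s :=
    (hqd 0).continuousAt.eventually (lt_mem_nhds (by simp only [hq]; simp; positivity))
  have hld : ∀ s, HasDerivAt (fun s : ℝ => x k + s * d) d s := fun s => by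
    simpa using ((hasDerivAt_id s).mul_const d).const_add (x k)
  have hlpos : ∀ᶠ s in 𝓝 (0 : ℝ), 0 < 1 + (x k + s * d) := by
    refine ((hld 0).continuousAt.const_add 1).eventually (lt_mem_nhds ?_)
    simp; linarith
  have hline : (fun s : ℝ => barrier k p (x + s • EuclideanSpace.single i (1 : ℝ)))
      = fun s => profile (x k + s * d) * q s ^ p := by
    funext s
    have : x + s • EuclideanSpace.single i (1 : ℝ) + EuclideanSpace.single k (1 : ℝ)
        = z + s • EuclideanSpace.single i (1 : ℝ) := by rw [hz]; abel
    simp only [barrier, this, norm_sq_line, hq, hd]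
    simp
  have hG : ∀ s, 0 < 1 + (x k + s * d) → HasDerivAt (fun s => profile (x k + s * d))
      ((x k + s * d) ^ 2 / (1 + (x k + s * d)) ^ 2 * d) s := fun s hs =>
    HasDerivAt.comp (h₂ := profile) s (hasDerivAt_profile hs) (hld s)
  have hG' : ∀ s, 0 < 1 + (x k + s * d) →
      HasDerivAt (fun s => (x k + s * d) ^ 2 / (1 + (x k + s * d)) ^ 2)
      (2 * (x k + s * d) / (1 + (x k + s * d)) ^ 3 * d) s := fun s hs =>
    HasDerivAt.comp (h₂ := fun t : ℝ => t ^ 2 / (1 + t) ^ 2) s (hasDerivAt_profile' hs) (hld s)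
  have hP : ∀ a s, 0 < q s → HasDerivAt (fun s => q s ^ a)
      ((2 * z i + 2 * s) * a * q s ^ (a - 1)) s := fun a s hs =>
    (hqd s).rpow_const (Or.inl hs.ne')
  refine fderiv_fderiv_eq_of_line (contDiffAt_barrier k p hx.le)
    (φ' := fun s => (x k + s * d) ^ 2 / (1 + (x k + s * d)) ^ 2 * d * q s ^ p
      + profile (x k + s * d) * ((2 * z i + 2 * s) * p * q s ^ (p - 1))) ?_ ?_
  · rw [hline]
    filter_upwards [hqpos, hlpos] with s h1 h2
    exact (hG s h2).mul (hP p s h1)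
  · have h1 := hqpos.self_of_nhds
    have h2 := hlpos.self_of_nhds
    have hlin : HasDerivAt (fun s : ℝ => 2 * z i + 2 * s) 2 0 := by
      simpa using ((hasDerivAt_id (0 : ℝ)).const_mul 2).const_add (2 * z i)
    have h := (((hG' 0 h2).mul_const d).mul (hP p 0 h1)).add
      ((hG 0 h2).mul ((hlin.mul_const p).mul (hP (p - 1) 0 h1)))
    refine h.congr_deriv ?_
    have hq0 : q 0 = ‖z‖ ^ 2 := by simp [hq]
    have hp2 : p - 1 - 1 = p - 2 := by ring
    rw [hq0, hp2]
    simp only [Pi.mul_apply, zero_mul, add_zero, mul_zero, hq0]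
    ring

/-- With the harmonic exponent `p = (2 - m) / 2`, only the terms in which the profile is
differentiated survive. -/
lemma laplacian_barrier {m : ℕ} (k : Fin m) {x : EuclideanSpace ℝ (Fin m)} (hx : 0 < x k)
    {p : ℝ} (hp : p = (2 - m) / 2) {r : ℝ}
    (hr : r = ‖x + EuclideanSpace.single k (1 : ℝ)‖ ^ 2) :
    laplacian (barrier k p) x
      = 2 * x k / (1 + x k) ^ 3 * r ^ p + 4 * p * (x k ^ 2 / (1 + x k)) * r ^ (p - 1) := by
  have hn := one_add_le_norm k x
  have hr0 : 0 < r := by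
    have : 0 < ‖x + EuclideanSpace.single k (1 : ℝ)‖ := by linarith
    rw [hr]; positivity
  unfold laplacian
  rw [Finset.sum_congr rfl fun i _ => fderiv_fderiv_barrier k i p hx rfl rfl]
  rw [← hr]
  set z := x + EuclideanSpace.single k (1 : ℝ) with hz
  have hs1 : ∑ i : Fin m, (EuclideanSpace.single i (1 : ℝ) : EuclideanSpace ℝ (Fin m)) k ^ 2
      = 1 := by
    simp
  have hs2 : ∑ i : Fin m, (EuclideanSpace.single i (1 : ℝ) : EuclideanSpace ℝ (Fin m)) k * z i
      = 1 + x k := by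
    simp [hz, add_comm]
  have hs3 : ∑ i : Fin m, z i ^ 2 = r := by
    rw [hr, EuclideanSpace.norm_sq_eq]
    simp
  have hpow : r ^ (p - 1) = r ^ (p - 2) * r := by
    rw [← Real.rpow_add_one hr0.ne']
    ring_nf
  rw [Finset.sum_add_distrib, Finset.sum_add_distrib, ← Finset.sum_mul, ← Finset.mul_sum,
    ← Finset.mul_sum, ← Finset.mul_sum, Finset.sum_add_distrib, ← Finset.mul_sum, hs1, hs2, hs3]
  simp only [Finset.sum_const, Finset.card_univ, Fintype.card_fin, nsmul_eq_mul]
  -- The coefficient of `profile` vanishes: `ρ ^ p` is harmonic for `p = (2 - m) / 2`.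
  have hharm : 4 * p * (p - 1) * r ^ (p - 2) * r + m * (2 * p * r ^ (p - 1)) = 0 := by
    rw [hpow, hp]; ring
  rw [hharm]
  have h1 : 1 + x k ≠ 0 := by linarith
  field_simp
  ring

/-- Lower bound for the solution `w̃` of `−Δw̃ = (x_{n+4}²/(1+x_{n+4}))|x+e_{n+4}|^{−n−4}`
in `ℝ^{n+4}₊` with zero boundary values and decay at infinity:
`w̃(x) ≥ (1/(2(n+2)))[1 + x_{n+4} − 2log(1+x_{n+4}) − 1/(1+x_{n+4})] |x+e_{n+4}|^{−n−2} ≥ 0`. -/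
theorem w1_lower_bound (n : ℕ) (hn : 1 ≤ n)
    (w : EuclideanSpace ℝ (Fin (n + 4)) → ℝ)
    (hwcont : ContinuousOn w {x : EuclideanSpace ℝ (Fin (n + 4)) | 0 ≤ x ⟨n + 3, by omega⟩})
    (hwC2 : ContDiffOn ℝ 2 w {x : EuclideanSpace ℝ (Fin (n + 4)) | 0 < x ⟨n + 3, by omega⟩})
    (hpde : ∀ x : EuclideanSpace ℝ (Fin (n + 4)), 0 < x ⟨n + 3, by omega⟩ →
      -laplacian w x
        = (x ⟨n + 3, by omega⟩) ^ 2 / (1 + x ⟨n + 3, by omega⟩)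
            * ‖x + EuclideanSpace.single (⟨n + 3, by omega⟩ : Fin (n + 4)) (1 : ℝ)‖
                ^ (-(n : ℝ) - 4))
    (hbdry : ∀ x : EuclideanSpace ℝ (Fin (n + 4)), x ⟨n + 3, by omega⟩ = 0 → w x = 0)
    (hdecay : ∀ ε > (0 : ℝ), ∃ R : ℝ, ∀ x : EuclideanSpace ℝ (Fin (n + 4)),
      0 ≤ x ⟨n + 3, by omega⟩ → R ≤ ‖x‖ → |w x| < ε) :
    ∀ x : EuclideanSpace ℝ (Fin (n + 4)), 0 ≤ x ⟨n + 3, by omega⟩ →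
      1 / (2 * ((n : ℝ) + 2))
          * (1 + x ⟨n + 3, by omega⟩ - 2 * Real.log (1 + x ⟨n + 3, by omega⟩)
              - 1 / (1 + x ⟨n + 3, by omega⟩))
          * ‖x + EuclideanSpace.single (⟨n + 3, by omega⟩ : Fin (n + 4)) (1 : ℝ)‖
              ^ (-(n : ℝ) - 2) ≤ w x
      ∧ 0 ≤ 1 / (2 * ((n : ℝ) + 2))
          * (1 + x ⟨n + 3, by omega⟩ - 2 * Real.log (1 + x ⟨n + 3, by omega⟩)
              - 1 / (1 + x ⟨n + 3, by omega⟩))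
          * ‖x + EuclideanSpace.single (⟨n + 3, by omega⟩ : Fin (n + 4)) (1 : ℝ)‖
              ^ (-(n : ℝ) - 2) := by
  set k : Fin (n + 4) := ⟨n + 3, by omega⟩ with hk
  set p : ℝ := -((n : ℝ) + 2) / 2 with hp
  set c : ℝ := 1 / (2 * ((n : ℝ) + 2)) with hc
  have hc0 : 0 < c := by positivity
  have hc1 : c ≤ 1 := by
    rw [hc, div_le_one (by positivity)]
    linarith [(Nat.cast_nonneg n : (0 : ℝ) ≤ n)]
  have hrpow : ∀ (x : EuclideanSpace ℝ (Fin (n + 4))) (a : ℝ),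
      (‖x + EuclideanSpace.single k (1 : ℝ)‖ ^ 2) ^ a
        = ‖x + EuclideanSpace.single k (1 : ℝ)‖ ^ (2 * a) := fun x a => by
    rw [← Real.rpow_natCast, ← Real.rpow_mul (norm_nonneg _)]
    norm_num
  have hbar : ∀ x : EuclideanSpace ℝ (Fin (n + 4)),
      c * (1 + x k - 2 * Real.log (1 + x k) - 1 / (1 + x k))
        * ‖x + EuclideanSpace.single k (1 : ℝ)‖ ^ (-(n : ℝ) - 2) = c * barrier k p x := by
    intro x
    have h2p : 2 * p = -(n : ℝ) - 2 := by rw [hp]; ring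
    rw [barrier, hrpow, h2p, mul_assoc, profile]
  have hbar0 : ∀ x : EuclideanSpace ℝ (Fin (n + 4)), 0 ≤ x k → 0 ≤ c * barrier k p x :=
    fun x hx => mul_nonneg hc0.le (mul_nonneg (profile_nonneg hx) (by positivity))
  -- From `g(t) ≤ 1 + t ≤ |x + e|` and `n ≥ 1`, the barrier is at most `|x + e|⁻¹`.
  have hbarle : ∀ x : EuclideanSpace ℝ (Fin (n + 4)), 0 ≤ x k →
      c * barrier k p x ≤ ‖x + EuclideanSpace.single k (1 : ℝ)‖⁻¹ := by
    intro x hx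
    have hn1 := one_add_le_norm k x
    have hle := profile_le hx
    set r := ‖x + EuclideanSpace.single k (1 : ℝ)‖ with hr
    have hr1 : 1 ≤ r := by linarith
    have hr0 : 0 < r := by linarith
    have hpos : 0 ≤ barrier k p x := mul_nonneg (profile_nonneg hx) (by positivity)
    calc c * barrier k p x ≤ 1 * barrier k p x := by gcongr
      _ = profile (x k) * r ^ (2 * p) := by rw [one_mul, barrier, hrpow]
      _ ≤ r * r ^ (-2 : ℝ) := by
          have hn' : (1 : ℝ) ≤ n := by exact_mod_cast hn
          have : r ^ (2 * p) ≤ r ^ (-2 : ℝ) :=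
            Real.rpow_le_rpow_of_exponent_le hr1 (by rw [hp]; linarith)
          gcongr
          linarith
      _ = r⁻¹ := by
          rw [Real.rpow_neg hr0.le, Real.rpow_two]
          field_simp
  have hopen : IsOpen {x : EuclideanSpace ℝ (Fin (n + 4)) | 0 < x k} :=
    isOpen_lt continuous_const (EuclideanSpace.proj (𝕜 := ℝ) k).continuous
  have hclosed : IsClosed {x : EuclideanSpace ℝ (Fin (n + 4)) | 0 ≤ x k} :=
    isClosed_le continuous_const (EuclideanSpace.proj (𝕜 := ℝ) k).continuous
  have hwC : ∀ x : EuclideanSpace ℝ (Fin (n + 4)), 0 < x k → ContDiffAt ℝ 2 w x :=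
    fun x hx => hwC2.contDiffAt (hopen.mem_nhds hx)
  set u : EuclideanSpace ℝ (Fin (n + 4)) → ℝ := fun x => c * barrier k p x - w x with hu
  have hstrict : ∀ x : EuclideanSpace ℝ (Fin (n + 4)), 0 < x k → 0 < laplacian u x := by
    intro x hx
    have hn1 := one_add_le_norm k x
    have hz0 : 0 < ‖x + EuclideanSpace.single k (1 : ℝ)‖ := by linarith
    have hw' := hpde x hx
    rw [hu, laplacian_const_mul_sub (contDiffAt_barrier k p hx.le) (hwC x hx),
      laplacian_barrier k hx (p := p) (by rw [hp]; push_cast; ring) rfl, hrpow x (p - 1)]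
    have he : 2 * (p - 1) = -(n : ℝ) - 4 := by rw [hp]; ring
    have hcp : c * (4 * p) = -1 := by
      rw [hc, hp]; field_simp; ring
    rw [he]
    have hpos : 0 < c * (2 * x k / (1 + x k) ^ 3
        * (‖x + EuclideanSpace.single k (1 : ℝ)‖ ^ 2) ^ p) := by positivity
    linear_combination hpos - hw' - (x k ^ 2 / (1 + x k)
      * ‖x + EuclideanSpace.single k (1 : ℝ)‖ ^ (-(n : ℝ) - 4)) * hcp
  have hucont : ContinuousOn u {x : EuclideanSpace ℝ (Fin (n + 4)) | 0 ≤ x k} := fun x hx =>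
    (((contDiffAt_barrier k p hx).continuousAt.continuousWithinAt).const_mul c).sub (hwcont x hx)
  have hmain : ∀ x : EuclideanSpace ℝ (Fin (n + 4)), 0 ≤ x k → u x ≤ 0 := by
    by_contra! hcon
    obtain ⟨x₀, hx₀, hux₀⟩ := hcon
    obtain ⟨R, hR⟩ := hdecay (u x₀ / 2) (by positivity)
    -- Outside this radius the barrier is at most `u x₀ / 2` and `|w|` is less than `u x₀ / 2`.
    set R' := max (max R ‖x₀‖) (2 / u x₀ + 1) with hR'
    have hx₀R : ‖x₀‖ ≤ R' := (le_max_right _ _).trans (le_max_left _ _)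
    have hfar : ∀ y : EuclideanSpace ℝ (Fin (n + 4)), 0 ≤ y k → R' ≤ ‖y‖ → u y < u x₀ := by
      intro y hy hyR
      have h1 := hR y hy ((le_max_left _ _).trans ((le_max_left _ _).trans hyR))
      have h2 : 2 / u x₀ ≤ ‖y + EuclideanSpace.single k (1 : ℝ)‖ := by
        have h3 : 2 / u x₀ + 1 ≤ ‖y‖ := (le_max_right _ _).trans hyR
        have h4 := norm_sub_le (y + EuclideanSpace.single k (1 : ℝ))
          (EuclideanSpace.single k (1 : ℝ))
        simp only [add_sub_cancel_right, PiLp.norm_single, norm_one] at h4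
        linarith
      have h5 : ‖y + EuclideanSpace.single k (1 : ℝ)‖⁻¹ ≤ u x₀ / 2 := by
        rw [← inv_div]
        exact inv_anti₀ (by positivity) h2
      have h6 := hbarle y hy
      have h7 := neg_abs_le (w y)
      simp only [hu] at *
      linarith
    obtain ⟨x₁, ⟨hx₁, -⟩, hmax⟩ :=
      ((isCompact_closedBall (0 : EuclideanSpace ℝ (Fin (n + 4))) R').inter_left
        hclosed).exists_isMaxOn
        ⟨x₀, hx₀, by simpa using hx₀R⟩
        (hucont.mono inter_subset_left)
    have hge : u x₀ ≤ u x₁ :=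
      hmax ⟨hx₀, by simpa using hx₀R⟩
    have hglob : ∀ y : EuclideanSpace ℝ (Fin (n + 4)), 0 ≤ y k → u y ≤ u x₁ := by
      intro y hy
      rcases le_total ‖y‖ R' with h | h
      · exact hmax ⟨hy, by simpa using h⟩
      · exact (hfar y hy h).le.trans hge
    have hx₁pos : 0 < x₁ k := by
      refine lt_of_le_of_ne hx₁ fun h => ?_
      have : u x₁ = 0 := by
        simp [hu, barrier, ← h, profile_zero, hbdry x₁ h.symm]
      linarith
    have hloc : IsLocalMax u x₁ :=
      Filter.mem_of_superset (hopen.mem_nhds hx₁pos) fun y hy => hglob y (le_of_lt hy)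
    have hsmooth : ContDiffAt ℝ 2 u x₁ :=
      (contDiffAt_const.mul (contDiffAt_barrier k p hx₁)).sub (hwC x₁ hx₁pos)
    exact absurd (laplacian_nonpos hsmooth hloc) (hstrict x₁ hx₁pos).not_ge
  intro x hx
  rw [hbar x]
  exact ⟨sub_nonpos.1 (hmain x hx), hbar0 x hx⟩
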